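/- Let H be a complex Hilbert space, M a von Neumann algebra acting on H, ξ₀ a cyclic and separating vector for M, and N another von Neumann algebra acting on H with the closure of {b ξ₀ : b ∈ N, b ≥ 0} contained in P♯. Let α : N → B(H) be a linear map such that α(x) ∈ M and α(x) ξ₀ = x ξ₀ for every x ∈ N, and let g ∈ M be an orthogonal projection commuting with α(N) such that α(xy)(1 − g) = α(y)α(x)(1 − g) for all x, y ∈ N and such that α(h)(1−g) is a projection for every projection h ∈ N. Suppose h ∈ N is a projection for which there exists a sequence (vₙ) in N with vₙ* vₙ = h for all n and vₙ vₙ* ζ → 0 for every ζ ∈ H. Then α(h)(1 − g) = 0. -/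

import Mathlib

open scoped InnerProductSpace
open Filter

variable {H : Type*} [NormedAddCommGroup H] [InnerProductSpace ℂ H] [CompleteSpace H]

/-- The positive cone `P♯`: the closure in `H` of `{a ξ₀ : a ∈ M, a positive}`. -/
def sharpCone (M : VonNeumannAlgebra H) (ξ₀ : H) : Set H :=
  closure {ζ : H | ∃ a : H →L[ℂ] H, a ∈ M ∧ a.IsPositive ∧ a ξ₀ = ζ}

/-- `ξ₀` is a cyclic vector for `M`: the linear span of `{x ξ₀ : x ∈ M}` is dense in `H`. -/
def IsCyclicVector (M : VonNeumannAlgebra H) (ξ₀ : H) : Prop :=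
  Dense ((Submodule.span ℂ ((fun x : H →L[ℂ] H => x ξ₀) '' (M : Set (H →L[ℂ] H)))) : Set H)

/-- `ξ₀` is a separating vector for `M`: `x ∈ M` and `x ξ₀ = 0` imply `x = 0`. -/
def IsSeparatingVector (M : VonNeumannAlgebra H) (ξ₀ : H) : Prop :=
  ∀ x : H →L[ℂ] H, x ∈ M → x ξ₀ = 0 → x = 0

/-- The orbit of a separating vector under the commutant is dense. -/
theorem IsSeparatingVector.dense_commutant {M : VonNeumannAlgebra H} {ξ : H}
    (hsep : IsSeparatingVector M ξ) :
    Dense {ζ : H | ∃ y ∈ M.commutant, y ξ = ζ} := by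
  let L : Submodule ℂ H :=
    M.commutant.toStarSubalgebra.toSubalgebra.toSubmodule.map
      (ContinuousLinearMap.apply ℂ H ξ : (H →L[ℂ] H) →ₗ[ℂ] H)
  have hL : ∀ ζ, ζ ∈ L ↔ ∃ y ∈ M.commutant, y ξ = ζ := fun ζ => Iff.rfl
  let K : Submodule ℂ H := L.topologicalClosure
  have : CompleteSpace K := L.isClosed_topologicalClosure.completeSpace_coe
  have hKM : K.starProjection ∈ M := by
    rw [VonNeumannAlgebra.IsStarProjection.mem_iff isStarProjection_starProjection]
    intro y hy
    rw [Submodule.range_starProjection]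
    refine Submodule.topologicalClosure_mem_invtSubmodule ?_
    rw [Module.End.mem_invtSubmodule_iff_forall_mem_of_mem]
    intro ζ hζ
    obtain ⟨z, hz, rfl⟩ := (hL ζ).1 hζ
    exact (hL _).2 ⟨y * z, mul_mem hy hz, rfl⟩
  have hξ : ξ ∈ K :=
    L.le_topologicalClosure ((hL ξ).2 ⟨1, one_mem _, rfl⟩)
  have hone : 1 - K.starProjection = 0 :=
    hsep _ (sub_mem (one_mem _) hKM) (by
      simp [Submodule.starProjection_eq_self_iff.2 hξ])
  intro ζ
  have hζ : K.starProjection ζ = ζ := by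
    rw [← sub_eq_zero.1 hone]; rfl
  exact Submodule.starProjection_eq_self_iff.1 hζ

/-- An element of `M` carrying a separating vector into the cone `P♯` is self-adjoint. -/
theorem IsSeparatingVector.isSelfAdjoint_of_mem_sharpCone {M : VonNeumannAlgebra H} {ξ : H}
    (hsep : IsSeparatingVector M ξ) {a : H →L[ℂ] H} (ha : a ∈ M)
    (haξ : a ξ ∈ sharpCone M ξ) : IsSelfAdjoint a := by
  rw [ContinuousLinearMap.isSelfAdjoint_iff_isSymmetric,
    LinearMap.isSymmetric_iff_inner_map_self_real]
  intro w
  refine hsep.dense_commutant.induction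
    (P := fun w => (starRingEnd ℂ) ⟪a w, w⟫_ℂ = ⟪a w, w⟫_ℂ) ?_
    (isClosed_eq (by fun_prop) (by fun_prop)) w
  rintro _ ⟨y, hy, rfl⟩
  have hcomm : ∀ b ∈ M, b (y ξ) = y (b ξ) := fun b hb =>
    DFunLike.congr_fun (VonNeumannAlgebra.mem_commutant_iff.1 hy b hb) ξ
  have hreal : sharpCone M ξ ⊆ {ζ | (starRingEnd ℂ) ⟪y ζ, y ξ⟫_ℂ = ⟪y ζ, y ξ⟫_ℂ} := by
    refine closure_minimal ?_ (isClosed_eq (by fun_prop) (by fun_prop))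
    rintro _ ⟨b, hb, hpos, rfl⟩
    rw [Set.mem_ofPred_eq, ← hcomm b hb]
    exact hpos.isSymmetric.conj_inner_sym _ _
  simpa [hcomm a ha] using hreal haξ

/-- An additive and homogeneous map from `N` to operators that is self-adjoint on positive
elements preserves adjoints. -/
theorem VonNeumannAlgebra.map_star_of_isSelfAdjoint_of_isPositive {N : VonNeumannAlgebra H}
    {α : (H →L[ℂ] H) → (H →L[ℂ] H)}
    (hadd : ∀ x ∈ N, ∀ y ∈ N, α (x + y) = α x + α y)
    (hsmul : ∀ (c : ℂ), ∀ x ∈ N, α (c • x) = c • α x)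
    (hpos : ∀ b ∈ N, b.IsPositive → IsSelfAdjoint (α b)) {x : H →L[ℂ] H} (hx : x ∈ N) :
    α (star x) = star (α x) := by
  have hsmul_mem : ∀ (c : ℂ), ∀ y ∈ N, c • y ∈ N := fun c y hy =>
    N.toStarSubalgebra.smul_mem hy c
  have hsa : ∀ y ∈ N, IsSelfAdjoint y → IsSelfAdjoint (α y) := by
    intro y hy hys
    have hc : (‖y‖ : ℂ) • (1 : H →L[ℂ] H) ∈ N := hsmul_mem _ _ (one_mem N)
    have hcpos : ((‖y‖ : ℂ) • (1 : H →L[ℂ] H)).IsPositive :=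
      ContinuousLinearMap.IsPositive.smul_of_nonneg ContinuousLinearMap.isPositive_one (by simp)
    have hsum : (y + (‖y‖ : ℂ) • (1 : H →L[ℂ] H)).IsPositive := by
      have := hys.neg_algebraMap_norm_le_self
      rw [ContinuousLinearMap.le_def, Algebra.algebraMap_eq_smul_one, sub_neg_eq_add] at this
      simpa using this
    have := (hpos _ (add_mem hy hc) hsum).sub (hpos _ hc hcpos)
    rwa [hadd _ hy _ hc, add_sub_cancel_right] at this
  have hx' : star x ∈ N := star_mem hx
  have hsum := hsa _ (add_mem hx hx') (IsSelfAdjoint.add_star_self x)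
  have hdiff := hsa (Complex.I • (x + (-1 : ℂ) • star x))
    (hsmul_mem _ _ (add_mem hx (hsmul_mem _ _ hx'))) (by
      rw [isSelfAdjoint_iff]
      simp [add_comm])
  rw [hadd _ hx _ hx', isSelfAdjoint_iff, star_add] at hsum
  rw [hsmul _ _ (add_mem hx (hsmul_mem _ _ hx')), hadd _ hx _ (hsmul_mem _ _ hx'),
    hsmul _ _ hx', isSelfAdjoint_iff] at hdiff
  have hdiff' : star (α x) - star (α (star x)) = α (star x) - α x := by
    have := congrArg (fun z => Complex.I • z) hdiff
    simpa [smul_smul, ← sub_eq_add_neg] using this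
  have htwo : (2 : ℂ) • α (star x) = (2 : ℂ) • star (α x) := by
    calc (2 : ℂ) • α (star x) = (α x + α (star x)) + (α (star x) - α x) := by module
      _ = (2 : ℂ) • star (α x) := by rw [← hsum, ← hdiff']; module
  exact smul_right_injective _ two_ne_zero htwo

/-- The antihomomorphic part of `α` vanishes on properly infinite projections:
if `h ∈ N` is a projection carrying a sequence of isometries `vₙ` with `vₙ vₙ* → 0` strongly,
then `α(h)(1 - g) = 0`. -/
theorem stmt6 (M N : VonNeumannAlgebra H) (ξ₀ : H)
    (hcyc : IsCyclicVector M ξ₀) (hsep : IsSeparatingVector M ξ₀)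
    (hsub : closure {ζ : H | ∃ b : H →L[ℂ] H, b ∈ N ∧ b.IsPositive ∧ b ξ₀ = ζ} ⊆
      sharpCone M ξ₀)
    (α : (H →L[ℂ] H) → (H →L[ℂ] H))
    (hadd : ∀ x ∈ N, ∀ y ∈ N, α (x + y) = α x + α y)
    (hsmul : ∀ (c : ℂ), ∀ x ∈ N, α (c • x) = c • α x)
    (hmem : ∀ x ∈ N, α x ∈ M)
    (hfix : ∀ x ∈ N, (α x) ξ₀ = x ξ₀)
    (g : H →L[ℂ] H) (hgM : g ∈ M) (hg_sa : IsSelfAdjoint g) (hg_idem : g * g = g)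
    (hg_comm : ∀ x ∈ N, g * α x = α x * g)
    (hg_anti : ∀ x ∈ N, ∀ y ∈ N, α (x * y) * (1 - g) = α y * α x * (1 - g))
    (hg_proj : ∀ h : H →L[ℂ] H, h ∈ N → IsSelfAdjoint h → h * h = h →
      IsSelfAdjoint (α h * (1 - g)) ∧ (α h * (1 - g)) * (α h * (1 - g)) = α h * (1 - g))
    (h : H →L[ℂ] H) (hhN : h ∈ N) (hh_sa : IsSelfAdjoint h) (hh_idem : h * h = h)
    (v : ℕ → (H →L[ℂ] H)) (hvN : ∀ n, v n ∈ N)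
    (hv_isom : ∀ n, star (v n) * v n = h)
    (hv_sot : ∀ ζ : H, Tendsto (fun n => (v n * star (v n)) ζ) atTop (nhds 0)) :
    α h * (1 - g) = 0 := by
  set p := α h * (1 - g) with hp
  obtain ⟨hp_sa, hp_idem⟩ := hg_proj h hhN hh_sa hh_idem
  have hpM : p ∈ M := mul_mem (hmem h hhN) (sub_mem (one_mem M) hgM)
  have hα_star : ∀ x ∈ N, α (star x) = star (α x) := fun x hx =>
    VonNeumannAlgebra.map_star_of_isSelfAdjoint_of_isPositive hadd hsmul
      (fun b hb hpos => hsep.isSelfAdjoint_of_mem_sharpCone (hmem b hb)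
        (hsub (subset_closure ⟨b, hb, hpos, (hfix b hb).symm⟩))) hx
  have hk : IsStarProjection (1 - g) := (IsStarProjection.mk hg_idem hg_sa).one_sub
  have hk_comm : ∀ x ∈ N, α x * (1 - g) = (1 - g) * α x := fun x hx => by
    rw [mul_sub, sub_mul, mul_one, one_mul, hg_comm x hx]
  have hfactor : ∀ n, p = star (α (star (v n)) * (1 - g)) * (α (star (v n)) * (1 - g)) := by
    intro n
    have hv' : star (v n) ∈ N := star_mem (hvN n)
    rw [star_mul, hk.isSelfAdjoint.star_eq, ← hα_star _ hv', star_star, hp, ← hv_isom n,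
      hg_anti _ hv' _ (hvN n), mul_assoc, mul_assoc, ← mul_assoc (1 - g), ← hk_comm _ (hvN n),
      mul_assoc, hk_comm _ hv', ← mul_assoc (1 - g), hk.isIdempotentElem.eq]
  have hbound : ∀ n, ‖p ξ₀‖ ^ 2 ≤ ‖ξ₀‖ * ‖(v n * star (v n)) ξ₀‖ := by
    intro n
    have hpn : ‖p ξ₀‖ ^ 2 = ‖(α (star (v n)) * (1 - g)) ξ₀‖ ^ 2 := by
      rw [ContinuousLinearMap.apply_norm_sq_eq_inner_adjoint_left,
        ContinuousLinearMap.apply_norm_sq_eq_inner_adjoint_left,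
        ← ContinuousLinearMap.star_eq_adjoint, ← ContinuousLinearMap.star_eq_adjoint,
        hp_sa.star_eq, ← ContinuousLinearMap.mul_def, ← ContinuousLinearMap.mul_def,
        hp_idem, ← hfactor n]
    have hle : ‖(α (star (v n)) * (1 - g)) ξ₀‖ ≤ ‖star (v n) ξ₀‖ := by
      rw [hk_comm _ (star_mem (hvN n)), mul_apply_eq_comp,
        hfix _ (star_mem (hvN n))]
      exact (ContinuousLinearMap.le_of_opNorm_le _ hk.norm_le _).trans_eq (one_mul _)
    calc ‖p ξ₀‖ ^ 2 ≤ ‖star (v n) ξ₀‖ ^ 2 := by rw [hpn]; gcongr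
      _ = RCLike.re ⟪(v n * star (v n)) ξ₀, ξ₀⟫_ℂ := by
        rw [ContinuousLinearMap.apply_norm_sq_eq_inner_adjoint_left,
          ← ContinuousLinearMap.star_eq_adjoint, star_star, ContinuousLinearMap.mul_def]
      _ ≤ ‖(v n * star (v n)) ξ₀‖ * ‖ξ₀‖ := re_inner_le_norm _ _
      _ = _ := mul_comm _ _
  have hlim : Tendsto (fun n => ‖ξ₀‖ * ‖(v n * star (v n)) ξ₀‖) atTop (nhds 0) := by
    simpa using ((hv_sot ξ₀).norm).const_mul ‖ξ₀‖
  have hzero : ‖p ξ₀‖ ^ 2 ≤ 0 := ge_of_tendsto' hlim hbound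
  refine hsep p hpM (norm_eq_zero.1 ?_)
  exact pow_eq_zero_iff two_ne_zero |>.1 (le_antisymm hzero (sq_nonneg _))
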